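/- Call a pair (γ,δ) ∈ [N]×[T] admissible if (α,β,γ,δ) ∈ 𝔛 for some α ∈ [N], β ∈ [M]. Suppose matrices R_χ ∈ ℝ^{n×n} (symmetric, for χ ∈ 𝔛), G_{γ,δ} ∈ ℝ^{n×n}, and F_{γ,δ} ∈ ℝ^{m×n} (for (γ,δ) ∈ [N]×[T]) satisfy, for every χ = (α,β,γ,δ) ∈ 𝔛, the positive definiteness of the symmetric block matrix [[R_χ, A_α G_{γ,δ} + B_α F_{γ,δ}],[(A_α G_{γ,δ} + B_α F_{γ,δ})ᵀ, G_{γ,δ} + G_{γ,δ}ᵀ − D̄_χ(R)]]. Then G_{γ,δ} is invertible for every admissible (γ,δ), and if the feedback gains satisfy K_{γ,δ} = F_{γ,δ} G_{γ,δ}⁻¹ for every admissible (γ,δ) (arbitrary otherwise), then the closed-loop system Σ_K is mean square stable. -/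

import Mathlib

open MeasureTheory ProbabilityTheory Matrix

noncomputable section

/-- The state space `[N] × [M] × [N] × [T]` of the extended process `r̄`.
`Fin N`, `Fin M`, `Fin T` play the roles of `[N] = {1,…,N}`, `[M]`, `[T]`
(with `Fin T` being the 0-indexed version of `[T] = {1,…,T}`, i.e. `δ ∈ [T]`
corresponds to `δ - 1 : Fin T`). -/
abbrev XT (NN MM T : ℕ) : Type := Fin NN × Fin MM × Fin NN × Fin T

/-- `X` is a time-homogeneous Markov chain with transition probability matrix `P`:
for every `k`, every state `j` and every sequence of states `i`,
`Pr(X(k+1) = j ∧ X(l) = i l for all l ≤ k) = P (i k) j * Pr(X(l) = i l for all l ≤ k)`. -/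
def IsMarkovChain {Ω : Type} {_mΩ : MeasurableSpace Ω} (μ : Measure Ω) {S : Type}
    (X : ℕ → Ω → S) (P : S → S → ℝ) : Prop :=
  ∀ (k : ℕ) (j : S) (i : ℕ → S),
    (μ {ω | X (k + 1) ω = j ∧ ∀ l ≤ k, X l ω = i l}).toReal
      = P (i k) j * (μ {ω | ∀ l ≤ k, X l ω = i l}).toReal

/-- `⌊m⌋_T`, the unique element of `{0,…,T-1}` congruent to `m` modulo `T`, as `Fin T`. -/
def intToFin (T : ℕ) [NeZero T] (a : ℤ) : Fin T :=
  ⟨(a % (T : ℤ)).toNat, by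
    have hT : 0 < (T : ℤ) := by
      exact_mod_cast Nat.pos_of_ne_zero (NeZero.ne T)
    have h1 : 0 ≤ a % (T : ℤ) := Int.emod_nonneg a (by omega)
    have h2 : a % (T : ℤ) < (T : ℤ) := Int.emod_lt_of_pos a hT
    omega⟩

-- `τ(k)`: the most recent observation time `≤ k` (i.e. the largest `j ≤ k` with
-- `f(s(j)) = 1`), or `τ₀` if no observation has occurred up to time `k` (`k < t₀`).
open Classical in
def tauZ {Ω : Type} {MM : ℕ} (s : ℕ → Ω → Fin MM) (f : Fin MM → Bool)
    (τ₀ : ℤ) (k : ℕ) (ω : Ω) : ℤ :=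
  if ∃ j ≤ k, f (s j ω) = true
  then ((Nat.findGreatest (fun j => f (s j ω) = true) k : ℕ) : ℤ)
  else τ₀

-- `σ(k) = r(τ(k))` if an observation occurred by time `k` (i.e. `k ≥ t₀`), else `σ₀`.
open Classical in
def sigmaProc {Ω : Type} {NN MM : ℕ} (r : ℕ → Ω → Fin NN) (s : ℕ → Ω → Fin MM)
    (f : Fin MM → Bool) (σ₀ : Fin NN) (k : ℕ) (ω : Ω) : Fin NN :=
  if ∃ j ≤ k, f (s j ω) = true
  then r (Nat.findGreatest (fun j => f (s j ω) = true) k) ω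
  else σ₀

/-- `ρ(k) = ⌊k - τ(k)⌋_T + 1 ∈ [T]`, represented 0-indexed as `⌊k - τ(k)⌋_T : Fin T`. -/
def rhoProc {Ω : Type} {MM T : ℕ} [NeZero T] (s : ℕ → Ω → Fin MM) (f : Fin MM → Bool)
    (τ₀ : ℤ) (k : ℕ) (ω : Ω) : Fin T :=
  intToFin T ((k : ℤ) - tauZ s f τ₀ k ω)

/-- The extended process `r̄(k) = (r(k), s(k), σ(k), ρ(k))`. -/
def rbarProc {Ω : Type} {NN MM T : ℕ} [NeZero T] (r : ℕ → Ω → Fin NN)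
    (s : ℕ → Ω → Fin MM) (f : Fin MM → Bool) (τ₀ : ℤ) (σ₀ : Fin NN)
    (k : ℕ) (ω : Ω) : XT NN MM T :=
  (r k ω, s k ω, sigmaProc r s f σ₀ k ω, rhoProc s f τ₀ k ω)

/-- Membership in `𝔛`: if `f(β) = 1` then `α = γ` and `δ = 1` (0-indexed: `δ = 0`). -/
def inX {NN MM T : ℕ} [NeZero T] (f : Fin MM → Bool) (χ : XT NN MM T) : Prop :=
  f χ.2.1 = true → χ.1 = χ.2.2.1 ∧ χ.2.2.2 = 0

/-- The transition probabilities `p̄_{χχ'}` of the extended chain. The condition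
`⌊δ' - δ - 1⌋_T = 0` for `δ, δ' ∈ [T]` is, in 0-indexed form, `δ' = δ + 1` in `Fin T`. -/
def pbar {NN MM T : ℕ} [NeZero T] (P : Matrix (Fin NN) (Fin NN) ℝ)
    (Q : Matrix (Fin MM) (Fin MM) ℝ) (f : Fin MM → Bool) (χ χ' : XT NN MM T) : ℝ :=
  (if f χ'.2.1 = true
    then (if χ'.1 = χ'.2.2.1 ∧ χ'.2.2.2 = 0 then (1 : ℝ) else 0)
    else (if χ'.2.2.1 = χ.2.2.1 ∧ χ'.2.2.2 = χ.2.2.2 + 1 then (1 : ℝ) else 0))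
  * P χ.1 χ'.1 * Q χ.2.1 χ'.2.1

/-- The state trajectory of the closed-loop system
`x(k+1) = A(mode(k)) x(k) + E(mode(k)) w(k)`, `x(0) = x₀`. -/
def traj {Ω S : Type} {n q : ℕ}
    (Amat : S → Matrix (Fin n) (Fin n) ℝ) (Emat : S → Matrix (Fin n) (Fin q) ℝ)
    (mode : ℕ → Ω → S) (w : ℕ → Ω → Fin q → ℝ) (x0 : Fin n → ℝ) : ℕ → Ω → Fin n → ℝ
  | 0, _ => x0
  | (k + 1), ω =>
      (Amat (mode k ω)).mulVec (traj Amat Emat mode w x0 k ω)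
        + (Emat (mode k ω)).mulVec (w k ω)

/-- `A_{K,χ} = A_α + B_α K_{γ,δ}`. -/
def AKmat {NN MM T n m : ℕ} (A : Fin NN → Matrix (Fin n) (Fin n) ℝ)
    (B : Fin NN → Matrix (Fin n) (Fin m) ℝ)
    (K : Fin NN → Fin T → Matrix (Fin m) (Fin n) ℝ) (χ : XT NN MM T) :
    Matrix (Fin n) (Fin n) ℝ :=
  A χ.1 + B χ.1 * K χ.2.2.1 χ.2.2.2

/-- `C_{K,χ} = C_α + D_α K_{γ,δ}`. -/
def CKmat {NN MM T n m ℓ : ℕ} (C : Fin NN → Matrix (Fin ℓ) (Fin n) ℝ)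
    (D : Fin NN → Matrix (Fin ℓ) (Fin m) ℝ)
    (K : Fin NN → Fin T → Matrix (Fin m) (Fin n) ℝ) (χ : XT NN MM T) :
    Matrix (Fin ℓ) (Fin n) ℝ :=
  C χ.1 + D χ.1 * K χ.2.2.1 χ.2.2.2

/-- Squared Euclidean norm of a vector, as an extended nonnegative real. -/
def sqE {d : ℕ} (v : Fin d → ℝ) : ENNReal := ENNReal.ofReal (∑ i, (v i) ^ 2)

-- The operator `D̄_χ(R) = ∑_{χ' ∈ 𝔛} p̄_{χ'χ} R_{χ'}`.
open Classical in
def Dop {NN MM T n : ℕ} [NeZero T] (P : Matrix (Fin NN) (Fin NN) ℝ)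
    (Q : Matrix (Fin MM) (Fin MM) ℝ) (f : Fin MM → Bool)
    (R : XT NN MM T → Matrix (Fin n) (Fin n) ℝ) (χ : XT NN MM T) :
    Matrix (Fin n) (Fin n) ℝ :=
  ∑ χ' : XT NN MM T, if inX f χ' then pbar P Q f χ' χ • R χ' else 0

-- The operator `F̄_χ(Z) = ∑_{χ' ∈ 𝔛} p̄_{χχ'} Z_{χ,χ'}`.
open Classical in
def Fop {NN MM T n : ℕ} [NeZero T] (P : Matrix (Fin NN) (Fin NN) ℝ)
    (Q : Matrix (Fin MM) (Fin MM) ℝ) (f : Fin MM → Bool)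
    (Z : XT NN MM T → XT NN MM T → Matrix (Fin n) (Fin n) ℝ) (χ : XT NN MM T) :
    Matrix (Fin n) (Fin n) ℝ :=
  ∑ χ' : XT NN MM T, if inX f χ' then pbar P Q f χ χ' • Z χ χ' else 0

/-- A pair `(γ,δ) ∈ [N] × [T]` is admissible if `(α,β,γ,δ) ∈ 𝔛` for some `α, β`. -/
def Admissible {NN MM T : ℕ} [NeZero T] (f : Fin MM → Bool) (g : Fin NN) (d : Fin T) : Prop :=
  ∃ (α : Fin NN) (β : Fin MM), inX (T := T) f (α, β, g, d)

/-- A realization, on some probability space, of the pair of independent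
time-homogeneous Markov chains `(r, s)` with transition matrices `P` and `Q`. -/
structure MJLSReal (NN MM : ℕ) (P : Matrix (Fin NN) (Fin NN) ℝ)
    (Q : Matrix (Fin MM) (Fin MM) ℝ) : Type 1 where
  Ω : Type
  inst : MeasurableSpace Ω
  μ : @Measure Ω inst
  prob : IsProbabilityMeasure μ
  r : ℕ → Ω → Fin NN
  s : ℕ → Ω → Fin MM
  meas_r : ∀ k, Measurable[inst] (r k)
  meas_s : ∀ k, Measurable[inst] (s k)
  markov_r : IsMarkovChain μ r fun i j => P i j
  markov_s : IsMarkovChain μ s fun i j => Q i j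
  indep : IndepFun (fun ω l => r l ω) (fun ω l => s l ω) μ

/-- A realization, on some probability space, of a time-homogeneous Markov chain `θ`
taking values in `𝔛` with transition probabilities `p̄`. -/
structure ThetaReal (NN MM T : ℕ) [NeZero T] (P : Matrix (Fin NN) (Fin NN) ℝ)
    (Q : Matrix (Fin MM) (Fin MM) ℝ) (f : Fin MM → Bool) : Type 1 where
  Ω : Type
  inst : MeasurableSpace Ω
  μ : @Measure Ω inst
  prob : IsProbabilityMeasure μ
  θ : ℕ → Ω → XT NN MM T
  meas : ∀ k, Measurable[inst] (θ k)
  mem : ∀ k ω, inX f (θ k ω)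
  markov : IsMarkovChain μ θ (pbar P Q f)

/-- Mean square stability of the closed-loop system `Σ_K`: there are `c > 0` and
`λ ∈ [0,1)` such that for every realization, every deterministic initialization
(`r(0) = r₀`, `s(0) = s₀` a.s., together with `σ₀` and `τ₀ ≤ 0`, so that `r̄(0)`
is a deterministic element of `𝔛`), every `x₀` and every `k`,
`E[‖x(k)‖²] ≤ c λ^k ‖x₀‖²` (with `w ≡ 0`). -/
def MeanSquareStable {NN MM T n m q : ℕ} [NeZero T]
    (P : Matrix (Fin NN) (Fin NN) ℝ) (Qm : Matrix (Fin MM) (Fin MM) ℝ) (f : Fin MM → Bool)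
    (A : Fin NN → Matrix (Fin n) (Fin n) ℝ) (B : Fin NN → Matrix (Fin n) (Fin m) ℝ)
    (E : Fin NN → Matrix (Fin n) (Fin q) ℝ)
    (K : Fin NN → Fin T → Matrix (Fin m) (Fin n) ℝ) : Prop :=
  ∃ c : ℝ, 0 < c ∧ ∃ lam : ℝ, 0 ≤ lam ∧ lam < 1 ∧
    ∀ (S : MJLSReal NN MM P Qm) (τ₀ : ℤ), τ₀ ≤ 0 →
      ∀ (σ₀ r₀ : Fin NN) (s₀ : Fin MM),
        (∀ᵐ ω ∂S.μ, S.r 0 ω = r₀ ∧ S.s 0 ω = s₀) →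
        ∀ (x0 : Fin n → ℝ) (k : ℕ),
          (∫⁻ ω, sqE (traj (AKmat A B K) (fun χ => E χ.1)
              (rbarProc S.r S.s f τ₀ σ₀) (fun _ _ => 0) x0 k ω) ∂S.μ)
            ≤ ENNReal.ofReal (c * lam ^ k * ∑ i, (x0 i) ^ 2)

/-- Mean square stability of `Σ̄_K` (the system driven by the chain `θ`). -/
def MeanSquareStableBar {NN MM T n m q : ℕ} [NeZero T]
    (P : Matrix (Fin NN) (Fin NN) ℝ) (Qm : Matrix (Fin MM) (Fin MM) ℝ) (f : Fin MM → Bool)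
    (A : Fin NN → Matrix (Fin n) (Fin n) ℝ) (B : Fin NN → Matrix (Fin n) (Fin m) ℝ)
    (E : Fin NN → Matrix (Fin n) (Fin q) ℝ)
    (K : Fin NN → Fin T → Matrix (Fin m) (Fin n) ℝ) : Prop :=
  ∃ c : ℝ, 0 < c ∧ ∃ lam : ℝ, 0 ≤ lam ∧ lam < 1 ∧
    ∀ (S : ThetaReal NN MM T P Qm f) (χ : XT NN MM T), inX f χ →
      (∀ᵐ ω ∂S.μ, S.θ 0 ω = χ) →
      ∀ (x0 : Fin n → ℝ) (k : ℕ),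
        (∫⁻ ω, sqE (traj (AKmat A B K) (fun χ' => E χ'.1) S.θ (fun _ _ => 0) x0 k ω) ∂S.μ)
          ≤ ENNReal.ofReal (c * lam ^ k * ∑ i, (x0 i) ^ 2)

/-- The impulse disturbance `w = e_i φ`, i.e. `w(0) = e_i` and `w(k) = 0` for `k ≥ 1`. -/
def impulse {Ω : Type} (q : ℕ) (i : Fin q) : ℕ → Ω → Fin q → ℝ :=
  fun k _ j => if k = 0 ∧ j = i then 1 else 0

/-- `∑_k E[‖z(k; 0, χ, e_i φ)‖²]` for `Σ_K` on a given realization with data `(τ₀, σ₀)`. -/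
def H2TermSigma {NN MM T n m q ℓ : ℕ} [NeZero T]
    {P : Matrix (Fin NN) (Fin NN) ℝ} {Qm : Matrix (Fin MM) (Fin MM) ℝ}
    (S : MJLSReal NN MM P Qm) (f : Fin MM → Bool) (τ₀ : ℤ) (σ₀ : Fin NN)
    (A : Fin NN → Matrix (Fin n) (Fin n) ℝ) (B : Fin NN → Matrix (Fin n) (Fin m) ℝ)
    (C : Fin NN → Matrix (Fin ℓ) (Fin n) ℝ) (D : Fin NN → Matrix (Fin ℓ) (Fin m) ℝ)
    (E : Fin NN → Matrix (Fin n) (Fin q) ℝ)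
    (K : Fin NN → Fin T → Matrix (Fin m) (Fin n) ℝ) (i : Fin q) : ENNReal :=
  ∑' k : ℕ, ∫⁻ ω, sqE ((CKmat C D K (rbarProc S.r S.s f τ₀ σ₀ k ω)).mulVec
      (traj (AKmat A B K) (fun χ => E χ.1) (rbarProc S.r S.s f τ₀ σ₀)
        (impulse q i) 0 k ω)) ∂S.μ

-- `‖Σ_K‖₂² < γ`, where `‖Σ_K‖₂² = ∑_{i=1}^q ∑_{χ ∈ 𝔛} μ̄(χ) ‖z(⬝;0,χ,e_iφ)‖₂²` and the
-- expectations are over arbitrary realizations with deterministic initialization `r̄(0) = χ`.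
open Classical in
def H2SqLtSigma {NN MM T n m q ℓ : ℕ} [NeZero T]
    (P : Matrix (Fin NN) (Fin NN) ℝ) (Qm : Matrix (Fin MM) (Fin MM) ℝ) (f : Fin MM → Bool)
    (A : Fin NN → Matrix (Fin n) (Fin n) ℝ) (B : Fin NN → Matrix (Fin n) (Fin m) ℝ)
    (C : Fin NN → Matrix (Fin ℓ) (Fin n) ℝ) (D : Fin NN → Matrix (Fin ℓ) (Fin m) ℝ)
    (E : Fin NN → Matrix (Fin n) (Fin q) ℝ)
    (K : Fin NN → Fin T → Matrix (Fin m) (Fin n) ℝ)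
    (μbar : XT NN MM T → ℝ) (γ : ℝ) : Prop :=
  ∀ (S : Fin q → XT NN MM T → MJLSReal NN MM P Qm)
    (τ : Fin q → XT NN MM T → ℤ) (σv : Fin q → XT NN MM T → Fin NN),
    (∀ i χ, inX f χ → τ i χ ≤ 0 ∧
        (∀ᵐ ω ∂(S i χ).μ, rbarProc (S i χ).r (S i χ).s f (τ i χ) (σv i χ) 0 ω = χ)) →
    (∑ i : Fin q, ∑ χ : XT NN MM T,
        if inX f χ
        then ENNReal.ofReal (μbar χ) * H2TermSigma (S i χ) f (τ i χ) (σv i χ) A B C D E K i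
        else 0)
      < ENNReal.ofReal γ

/-- `∑_k E[‖z̄(k; 0, χ, e_i φ)‖²]` for `Σ̄_K` on a given realization of `θ`. -/
def H2TermBar {NN MM T n m q ℓ : ℕ} [NeZero T]
    {P : Matrix (Fin NN) (Fin NN) ℝ} {Qm : Matrix (Fin MM) (Fin MM) ℝ} {f : Fin MM → Bool}
    (S : ThetaReal NN MM T P Qm f)
    (A : Fin NN → Matrix (Fin n) (Fin n) ℝ) (B : Fin NN → Matrix (Fin n) (Fin m) ℝ)
    (C : Fin NN → Matrix (Fin ℓ) (Fin n) ℝ) (D : Fin NN → Matrix (Fin ℓ) (Fin m) ℝ)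
    (E : Fin NN → Matrix (Fin n) (Fin q) ℝ)
    (K : Fin NN → Fin T → Matrix (Fin m) (Fin n) ℝ) (i : Fin q) : ENNReal :=
  ∑' k : ℕ, ∫⁻ ω, sqE ((CKmat C D K (S.θ k ω)).mulVec
      (traj (AKmat A B K) (fun χ => E χ.1) S.θ (impulse q i) 0 k ω)) ∂S.μ

-- `‖Σ̄_K‖₂² < γ` (the `H₂` norm of `Σ̄_K`, defined with `θ` in place of `r̄`).
open Classical in
def H2SqLtBar {NN MM T n m q ℓ : ℕ} [NeZero T]
    (P : Matrix (Fin NN) (Fin NN) ℝ) (Qm : Matrix (Fin MM) (Fin MM) ℝ) (f : Fin MM → Bool)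
    (A : Fin NN → Matrix (Fin n) (Fin n) ℝ) (B : Fin NN → Matrix (Fin n) (Fin m) ℝ)
    (C : Fin NN → Matrix (Fin ℓ) (Fin n) ℝ) (D : Fin NN → Matrix (Fin ℓ) (Fin m) ℝ)
    (E : Fin NN → Matrix (Fin n) (Fin q) ℝ)
    (K : Fin NN → Fin T → Matrix (Fin m) (Fin n) ℝ)
    (μbar : XT NN MM T → ℝ) (γ : ℝ) : Prop :=
  ∀ (S : Fin q → XT NN MM T → ThetaReal NN MM T P Qm f),
    (∀ i χ, inX f χ → (∀ᵐ ω ∂(S i χ).μ, (S i χ).θ 0 ω = χ)) →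
    (∑ i : Fin q, ∑ χ : XT NN MM T,
        if inX f χ
        then ENNReal.ofReal (μbar χ) * H2TermBar (S i χ) A B C D E K i
        else 0)
      < ENNReal.ofReal γ

/-- The σ-algebra `Θ_k` generated by `r(0), s(0), …, r(k), s(k)`, for a realization. -/
def sigFiltSigma {NN MM : ℕ} {P : Matrix (Fin NN) (Fin NN) ℝ}
    {Q : Matrix (Fin MM) (Fin MM) ℝ} (S : MJLSReal NN MM P Q) (k : ℕ) :
    MeasurableSpace S.Ω :=
  ⨆ j ∈ Finset.range (k + 1),
    (MeasurableSpace.comap (S.r j) inferInstance ⊔ MeasurableSpace.comap (S.s j) inferInstance)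

/-- The σ-algebra generated by `θ(0), …, θ(k)`, for a realization of `θ`. -/
def sigFiltBar {NN MM T : ℕ} [NeZero T] {P : Matrix (Fin NN) (Fin NN) ℝ}
    {Q : Matrix (Fin MM) (Fin MM) ℝ} {f : Fin MM → Bool} (S : ThetaReal NN MM T P Q f)
    (k : ℕ) : MeasurableSpace S.Ω :=
  ⨆ j ∈ Finset.range (k + 1), MeasurableSpace.comap (S.θ j) inferInstance

/-- `Σ_K` satisfies `‖Σ_K‖∞² < γ`: there is `0 ≤ c < γ` such that `‖z‖₂² ≤ c ‖w‖₂²`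
for every realization, every deterministic initialization `r̄(0) = r̄₀ ∈ 𝔛`, and
every nonzero `w ∈ ℓ²(ℝ^q)` adapted to `(Θ_k)_k` (with `x₀ = 0`). -/
def HinfSqLtSigma {NN MM T n m q ℓ : ℕ} [NeZero T]
    (P : Matrix (Fin NN) (Fin NN) ℝ) (Qm : Matrix (Fin MM) (Fin MM) ℝ) (f : Fin MM → Bool)
    (A : Fin NN → Matrix (Fin n) (Fin n) ℝ) (B : Fin NN → Matrix (Fin n) (Fin m) ℝ)
    (C : Fin NN → Matrix (Fin ℓ) (Fin n) ℝ) (D : Fin NN → Matrix (Fin ℓ) (Fin m) ℝ)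
    (E : Fin NN → Matrix (Fin n) (Fin q) ℝ)
    (K : Fin NN → Fin T → Matrix (Fin m) (Fin n) ℝ) (γ : ℝ) : Prop :=
  ∃ c : ℝ, 0 ≤ c ∧ c < γ ∧
    ∀ (S : MJLSReal NN MM P Qm) (τ₀ : ℤ), τ₀ ≤ 0 → ∀ (σ₀ : Fin NN) (χ : XT NN MM T),
      inX f χ → (∀ᵐ ω ∂S.μ, rbarProc S.r S.s f τ₀ σ₀ 0 ω = χ) →
      ∀ (w : ℕ → S.Ω → Fin q → ℝ),
        (∀ k, Measurable[sigFiltSigma S k] (w k)) →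
        0 < (∑' k : ℕ, ∫⁻ ω, sqE (w k ω) ∂S.μ) →
        (∑' k : ℕ, ∫⁻ ω, sqE (w k ω) ∂S.μ) ≠ ⊤ →
        (∑' k : ℕ, ∫⁻ ω, sqE ((CKmat C D K (rbarProc S.r S.s f τ₀ σ₀ k ω)).mulVec
            (traj (AKmat A B K) (fun χ' => E χ'.1) (rbarProc S.r S.s f τ₀ σ₀) w 0 k ω)) ∂S.μ)
          ≤ ENNReal.ofReal c * (∑' k : ℕ, ∫⁻ ω, sqE (w k ω) ∂S.μ)

/-- `Σ̄_K` satisfies `‖Σ̄_K‖∞² < γ` (disturbances adapted to the filtration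
generated by `θ`). -/
def HinfSqLtBar {NN MM T n m q ℓ : ℕ} [NeZero T]
    (P : Matrix (Fin NN) (Fin NN) ℝ) (Qm : Matrix (Fin MM) (Fin MM) ℝ) (f : Fin MM → Bool)
    (A : Fin NN → Matrix (Fin n) (Fin n) ℝ) (B : Fin NN → Matrix (Fin n) (Fin m) ℝ)
    (C : Fin NN → Matrix (Fin ℓ) (Fin n) ℝ) (D : Fin NN → Matrix (Fin ℓ) (Fin m) ℝ)
    (E : Fin NN → Matrix (Fin n) (Fin q) ℝ)
    (K : Fin NN → Fin T → Matrix (Fin m) (Fin n) ℝ) (γ : ℝ) : Prop :=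
  ∃ c : ℝ, 0 ≤ c ∧ c < γ ∧
    ∀ (S : ThetaReal NN MM T P Qm f) (χ : XT NN MM T),
      inX f χ → (∀ᵐ ω ∂S.μ, S.θ 0 ω = χ) →
      ∀ (w : ℕ → S.Ω → Fin q → ℝ),
        (∀ k, Measurable[sigFiltBar S k] (w k)) →
        0 < (∑' k : ℕ, ∫⁻ ω, sqE (w k ω) ∂S.μ) →
        (∑' k : ℕ, ∫⁻ ω, sqE (w k ω) ∂S.μ) ≠ ⊤ →
        (∑' k : ℕ, ∫⁻ ω, sqE ((CKmat C D K (S.θ k ω)).mulVec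
            (traj (AKmat A B K) (fun χ' => E χ'.1) S.θ w 0 k ω)) ∂S.μ)
          ≤ ENNReal.ofReal c * (∑' k : ℕ, ∫⁻ ω, sqE (w k ω) ∂S.μ)

/-- The symmetric 4×4 block matrix appearing in the `H∞` LMI, with diagonal blocks
`D1, γ I_q, D3, I_ℓ`, sub-diagonal blocks `(3,1) = B31`, `(3,2) = B32`, `(4,1) = B41`,
the corresponding transposed blocks above the diagonal, and zeros elsewhere. -/
def hinfBlock {n q ℓ : ℕ} (γ : ℝ) (D1 D3 : Matrix (Fin n) (Fin n) ℝ)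
    (B31 : Matrix (Fin n) (Fin n) ℝ) (B32 : Matrix (Fin n) (Fin q) ℝ)
    (B41 : Matrix (Fin ℓ) (Fin n) ℝ) :
    Matrix ((Fin n ⊕ Fin q) ⊕ (Fin n ⊕ Fin ℓ)) ((Fin n ⊕ Fin q) ⊕ (Fin n ⊕ Fin ℓ)) ℝ :=
  Matrix.fromBlocks
    (Matrix.fromBlocks D1 0 0 (γ • (1 : Matrix (Fin q) (Fin q) ℝ)))
    (Matrix.fromBlocks B31ᵀ B41ᵀ B32ᵀ 0)
    (Matrix.fromBlocks B31 B32 B41 0)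
    (Matrix.fromBlocks D3 0 0 (1 : Matrix (Fin ℓ) (Fin ℓ) ℝ))

/-!
The extended process `r̄` obeys a recursion `r̄(k+1) = φ(r̄(k), r(k+1), s(k+1))` and determines
`(r, s)`, so it is a Markov chain with transition probabilities `p̄`, and `Σ_K` becomes a jump
linear system whose mode `r̄` is Markov. Multiplying the LMI at `χ` by `[1, -A_{K,χ}]` on the left
and by its transpose on the right cancels `G` and leaves the Lyapunov inequality
`A_{K,χ} D̄_χ(R) A_{K,χ}ᵀ < R_χ`. By strictness there is a single `ε ∈ (0, 1)` with
`A_{K,χ} (D̄_χ(R) + ε) A_{K,χ}ᵀ ≤ (1 - ε) R_χ` for all `χ`. Applying `D̄` to both sides, the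
matrices `D̄_χ(R) + ε` contract by the factor `1 - ε` under the recursion of the
mode-conditioned second moments `E[x(k) x(k)ᵀ 𝟙(r̄(k) = χ)]`, hence dominate these moments up to
a constant times `(1 - ε)ᵏ ‖x₀‖²`.
-/

section LinearAlgebra

open Filter Topology
open scoped MatrixOrder

theorem posDef_sub_mul_mul_conjTranspose_of_fromBlocks {m n 𝕜 : Type*} [Finite m] [Fintype n]
    [CommRing 𝕜] [PartialOrder 𝕜] [StarRing 𝕜] {R : Matrix m m 𝕜} {A : Matrix m n 𝕜}
    {G S : Matrix n n 𝕜} (h : (fromBlocks R (A * G) (A * G)ᴴ (G + Gᴴ - S)).PosDef) :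
    (R - A * S * Aᴴ).PosDef := by
  classical
  cases nonempty_fintype m
  have hinj : Function.Injective fun v => v ᵥ* fromCols 1 (-A) := fun v w hvw => by
    simpa using congrArg (fun y : m ⊕ n → 𝕜 => y ∘ Sum.inl) hvw
  convert h.mul_mul_conjTranspose_same hinj using 1
  simp only [conjTranspose_fromCols_eq_fromRows_conjTranspose, fromCols_mul_fromBlocks,
    fromCols_mul_fromRows, conjTranspose_mul, conjTranspose_one, conjTranspose_neg,
    Matrix.mul_add, Matrix.add_mul, Matrix.mul_sub, Matrix.sub_mul, Matrix.mul_assoc,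
    Matrix.one_mul, Matrix.mul_one, Matrix.neg_mul, Matrix.mul_neg]
  abel

theorem isUnit_of_posDef_add_conjTranspose {n 𝕜 : Type*} [Fintype n] [DecidableEq n] [Field 𝕜]
    [PartialOrder 𝕜] [StarRing 𝕜] {G : Matrix n n 𝕜} (h : (G + Gᴴ).PosDef) : IsUnit G := by
  rw [← mulVec_injective_iff_isUnit, ← coe_mulVecLin, injective_iff_map_eq_zero]
  intro v hv
  rw [mulVecLin_apply] at hv
  by_contra hne
  have hpos := h.dotProduct_mulVec_pos hne
  rw [add_mulVec, hv, zero_add, dotProduct_mulVec, ← star_mulVec, hv, star_zero,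
    zero_dotProduct] at hpos
  exact hpos.false

theorem eventually_smul_le_of_isStrictlyPositive {R : Type*} [TopologicalSpace R] [Ring R]
    [StarRing R] [PartialOrder R] [StarOrderedRing R] [Algebra ℝ R] [StarModule ℝ R]
    [NonnegSpectrumClass ℝ R] [ContinuousFunctionalCalculus ℝ R IsSelfAdjoint] {a b : R}
    (ha : IsStrictlyPositive a) (hb : IsSelfAdjoint b) : ∀ᶠ ε : ℝ in 𝓝[>] 0, ε • b ≤ a := by
  rcases subsingleton_or_nontrivial R with _ | _
  · exact .of_forall fun ε => (Subsingleton.elim _ _).le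
  obtain ⟨r, hr, hra⟩ :=
    (CFC.exists_pos_algebraMap_le_iff ha.isSelfAdjoint).2 fun x hx => ha.spectrum_pos hx
  obtain ⟨C, hC⟩ := (ContinuousFunctionalCalculus.isCompact_spectrum (R := ℝ) b).bddAbove
  have hbC : b ≤ algebraMap ℝ R C := le_algebraMap_of_spectrum_le fun x hx => hC hx
  have hlim : Tendsto (fun ε : ℝ => ε * C) (𝓝[>] 0) (𝓝 0) :=
    ((continuous_mul_const C).tendsto' 0 0 (zero_mul C)).mono_left nhdsWithin_le_nhds
  filter_upwards [self_mem_nhdsWithin, hlim.eventually_le_const hr] with ε hε hεC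
  calc ε • b ≤ ε • algebraMap ℝ R C := smul_le_smul_of_nonneg_left hbC (Set.mem_Ioi.1 hε).le
    _ = algebraMap ℝ R (ε * C) := by rw [map_mul, Algebra.smul_def]
    _ ≤ algebraMap ℝ R r := algebraMap_mono R hεC
    _ ≤ a := hra

theorem exists_mul_add_smul_one_mul_le {ι n : Type*} [Fintype n] [DecidableEq n] {s : Finset ι}
    {A D R : ι → Matrix n n ℝ} (hR : ∀ i ∈ s, (R i).IsHermitian)
    (h : ∀ i ∈ s, (R i - A i * D i * (A i)ᵀ).PosDef) :
    ∃ ε : ℝ, 0 < ε ∧ ε < 1 ∧ ∀ i ∈ s, A i * (D i + ε • 1) * (A i)ᵀ ≤ (1 - ε) • R i := by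
  have hev : ∀ᶠ ε : ℝ in 𝓝[>] 0, ∀ i ∈ s,
      ε • (R i + A i * (A i)ᵀ) ≤ R i - A i * D i * (A i)ᵀ :=
    (Filter.eventually_all_finset s).2 fun i hi =>
      eventually_smul_le_of_isStrictlyPositive (h i hi).isStrictlyPositive
        ((hR i hi).add (isHermitian_mul_conjTranspose_self (A i))).isSelfAdjoint
  obtain ⟨ε, hεs, hε0, hε1⟩ := (hev.and (Ioo_mem_nhdsGT (zero_lt_one' ℝ))).exists
  refine ⟨ε, hε0, hε1, fun i hi => sub_nonneg.1 ?_⟩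
  convert sub_nonneg.2 (hεs i hi) using 1
  simp only [Matrix.mul_add, Matrix.add_mul, Matrix.mul_smul, Matrix.smul_mul, Matrix.mul_one,
    smul_add, sub_smul, one_smul]
  abel

variable {n : Type*} [Fintype n]

theorem dotProduct_mulVec_le_of_le {B C : Matrix n n ℝ} (h : B ≤ C) (u : n → ℝ) :
    u ⬝ᵥ B *ᵥ u ≤ u ⬝ᵥ C *ᵥ u := by
  simpa [sub_mulVec] using (Matrix.le_iff.1 h).dotProduct_mulVec_nonneg u

theorem transpose_mulVec_dotProduct_mulVec {m α : Type*} [Fintype m] [CommSemiring α]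
    (A : Matrix m n α) (Y : Matrix n n α) (u : m → α) :
    Aᵀ *ᵥ u ⬝ᵥ Y *ᵥ Aᵀ *ᵥ u = u ⬝ᵥ (A * Y * Aᵀ) *ᵥ u := by
  rw [mulVec_transpose, ← dotProduct_mulVec, ← mulVec_transpose, mulVec_mulVec, mulVec_mulVec]

theorem sq_dotProduct_le_of_posSemidef [DecidableEq n] {D : Matrix n n ℝ} (hD : D.PosSemidef)
    {ε : ℝ} (hε : 0 < ε) (u v : n → ℝ) :
    (u ⬝ᵥ v) ^ 2 ≤ ε⁻¹ * (∑ i, v i ^ 2) * (u ⬝ᵥ (D + ε • 1) *ᵥ u) := by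
  have hDu : 0 ≤ u ⬝ᵥ D *ᵥ u := hD.dotProduct_mulVec_nonneg u
  have hform : u ⬝ᵥ (D + ε • 1) *ᵥ u = u ⬝ᵥ D *ᵥ u + ε * ∑ i, u i ^ 2 := by
    rw [add_mulVec, smul_mulVec, one_mulVec, dotProduct_add, dotProduct_smul, smul_eq_mul]
    simp only [dotProduct, sq]
  calc (u ⬝ᵥ v) ^ 2 ≤ (∑ i, u i ^ 2) * ∑ i, v i ^ 2 := Finset.sum_mul_sq_le_sq_mul_sq _ u v
    _ = ε⁻¹ * (∑ i, v i ^ 2) * (ε * ∑ i, u i ^ 2) := by field_simp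
    _ ≤ ε⁻¹ * (∑ i, v i ^ 2) * (u ⬝ᵥ (D + ε • 1) *ᵥ u) := by
      rw [hform]
      gcongr
      linarith

end LinearAlgebra

section CouplingOp

open scoped MatrixOrder

variable {S n : Type*} {p : S → S → ℝ} {s : Finset S} {R : S → Matrix n n ℝ}

/-- The operator `R ↦ D̄(R)` of a jump linear system whose mode moves in `s` with transition
probabilities `p`: the matrices `R y` are averaged over the modes `y` *preceding* `z`. -/
def couplingOp (p : S → S → ℝ) (s : Finset S) (R : S → Matrix n n ℝ) (z : S) : Matrix n n ℝ :=
  ∑ y ∈ s, p y z • R y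

theorem couplingOp_smul (c : ℝ) (z : S) :
    couplingOp p s (fun y => c • R y) z = c • couplingOp p s R z := by
  simp only [couplingOp, Finset.smul_sum, smul_comm c]

theorem couplingOp_mono [Finite n] (hp : ∀ y z, 0 ≤ p y z) {R' : S → Matrix n n ℝ}
    (h : ∀ y ∈ s, R y ≤ R' y) (z : S) : couplingOp p s R z ≤ couplingOp p s R' z := by
  cases nonempty_fintype n
  exact Finset.sum_le_sum fun y hy => smul_le_smul_of_nonneg_left (h y hy) (hp y z)

theorem posSemidef_couplingOp (hp : ∀ y z, 0 ≤ p y z) (h : ∀ y ∈ s, (R y).PosSemidef) (z : S) :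
    (couplingOp p s R z).PosSemidef :=
  posSemidef_sum s fun y hy => (h y hy).smul (hp y z)

theorem couplingOp_le_smul_couplingOp_add [Fintype n] [DecidableEq n] (hp : ∀ y z, 0 ≤ p y z)
    {A : S → Matrix n n ℝ} {ε : ℝ} (hε0 : 0 ≤ ε) (hε1 : ε ≤ 1)
    (h : ∀ y ∈ s, A y * (couplingOp p s R y + ε • 1) * (A y)ᵀ ≤ (1 - ε) • R y) (z : S) :
    couplingOp p s (fun y => A y * (couplingOp p s R y + ε • 1) * (A y)ᵀ) z ≤
      (1 - ε) • (couplingOp p s R z + ε • 1) :=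
  calc couplingOp p s (fun y => A y * (couplingOp p s R y + ε • 1) * (A y)ᵀ) z
      ≤ couplingOp p s (fun y => (1 - ε) • R y) z := couplingOp_mono hp h z
    _ = (1 - ε) • couplingOp p s R z := couplingOp_smul (1 - ε) z
    _ ≤ (1 - ε) • (couplingOp p s R z + ε • 1) :=
      smul_le_smul_of_nonneg_left
        (le_add_of_nonneg_right (smul_nonneg hε0 zero_le_one)) (sub_nonneg.2 hε1)

end CouplingOp

section History

variable {Ω S : Type} {mΩ : MeasurableSpace Ω} {μ : Measure Ω} {X : ℕ → Ω → S}

theorem IsMarkovChain.measure_inter_eq [IsFiniteMeasure μ] {P : S → S → ℝ}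
    (h : IsMarkovChain μ X P) (k : ℕ) (j : S) (i : ℕ → S) :
    μ {ω | X (k + 1) ω = j ∧ ∀ l ≤ k, X l ω = i l} =
      ENNReal.ofReal (P (i k) j) * μ {ω | ∀ l ≤ k, X l ω = i l} := by
  rw [← ENNReal.ofReal_toReal (measure_ne_top μ _), h k j i,
    ENNReal.ofReal_mul' ENNReal.toReal_nonneg, ENNReal.ofReal_toReal (measure_ne_top μ _)]

variable [MeasurableSpace S] [MeasurableSingletonClass S]

theorem lintegral_eq_sum_setLIntegral_preimage {Y : Ω → S} (hY : Measurable Y) {s : Finset S}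
    (hs : ∀ ω, Y ω ∈ s) (f : Ω → ENNReal) :
    ∫⁻ ω, f ω ∂μ = ∑ y ∈ s, ∫⁻ ω in Y ⁻¹' {y}, f ω ∂μ := by
  rw [← lintegral_biUnion_finset (Set.pairwiseDisjoint_fiber Y _)
    (fun y _ => hY (measurableSet_singleton y)), ← setLIntegral_univ]
  congr 2
  ext ω
  simpa using hs ω

variable [Countable S]

theorem measurable_comp_of_dependsOn {β : Type*} [MeasurableSpace β]
    (hX : ∀ k, Measurable (X k)) {k : ℕ} {g : (ℕ → S) → β} (hg : DependsOn g (Set.Iic k)) :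
    Measurable fun ω => g fun l => X l ω := by
  rcases isEmpty_or_nonempty β with _ | _
  · have : IsEmpty Ω := ⟨fun ω => isEmptyElim (g fun l => X l ω)⟩
    exact measurable_of_empty _
  obtain ⟨φ, rfl⟩ := dependsOn_iff_exists_comp.1 hg
  exact (measurable_of_countable φ).comp (measurable_pi_lambda _ fun l => hX l)

theorem IsMarkovChain.setLIntegral_succ [IsFiniteMeasure μ] {P : S → S → ℝ}
    (h : IsMarkovChain μ X P) (hX : ∀ k, Measurable (X k)) {k : ℕ} (j : S)
    {g : (ℕ → S) → ENNReal} (hg : DependsOn g (Set.Iic k)) :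
    ∫⁻ ω in X (k + 1) ⁻¹' {j}, g (fun l => X l ω) ∂μ =
      ∫⁻ ω, ENNReal.ofReal (P (X k ω) j) * g (fun l => X l ω) ∂μ := by
  obtain ⟨φ, rfl⟩ := dependsOn_iff_exists_comp.1 hg
  let past (ω : Ω) : Set.Iic k → S := fun l => X l ω
  have hpast : Measurable past := measurable_pi_lambda _ fun l => hX l
  calc ∫⁻ ω in X (k + 1) ⁻¹' {j}, φ (past ω) ∂μ
      = ∫⁻ x, φ x ∂(μ.restrict (X (k + 1) ⁻¹' {j})).map past :=
        (lintegral_map (measurable_of_countable φ) hpast).symm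
    _ = ∫⁻ x, ENNReal.ofReal (P (x ⟨k, Set.self_mem_Iic⟩) j) * φ x ∂μ.map past := ?_
    _ = ∫⁻ ω, ENNReal.ofReal (P (X k ω) j) * φ (past ω) ∂μ :=
        lintegral_map (measurable_of_countable _) hpast
  rw [lintegral_countable', lintegral_countable']
  refine tsum_congr fun x => ?_
  rw [Measure.map_apply hpast (measurableSet_singleton x),
    Measure.map_apply hpast (measurableSet_singleton x),
    Measure.restrict_apply (hpast (measurableSet_singleton x))]
  rcases (past ⁻¹' {x}).eq_empty_or_nonempty with hx | ⟨ω₀, rfl⟩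
  · simp [hx]
  have hfib : past ⁻¹' {past ω₀} = {ω | ∀ l ≤ k, X l ω = X l ω₀} := by
    ext ω
    simp [past, funext_iff]
  have hinter : past ⁻¹' {past ω₀} ∩ X (k + 1) ⁻¹' {j} =
      {ω | X (k + 1) ω = j ∧ ∀ l ≤ k, X l ω = X l ω₀} := by
    rw [hfib, Set.inter_comm]
    rfl
  rw [hinter, hfib, h.measure_inter_eq]
  ring

end History

section Trajectory

variable {Ω S : Type} {n q : ℕ}

theorem dependsOn_traj (A : S → Matrix (Fin n) (Fin n) ℝ) (E : S → Matrix (Fin n) (Fin q) ℝ)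
    (w : ℕ → Fin q → ℝ) (x₀ : Fin n → ℝ) (k : ℕ) :
    DependsOn (traj A E (fun l (y : ℕ → S) => y l) (fun k _ => w k) x₀ k) (Set.Iio k) := by
  induction k with
  | zero => exact fun _ _ _ => rfl
  | succ k ih =>
    intro y z h
    simp only [traj]
    rw [h k (by simp), ih fun l hl => h l (Nat.lt_succ_of_lt hl)]

theorem traj_eq_comp (θ : ℕ → Ω → S) (A : S → Matrix (Fin n) (Fin n) ℝ)
    (E : S → Matrix (Fin n) (Fin q) ℝ) (w : ℕ → Fin q → ℝ) (x₀ : Fin n → ℝ) (k : ℕ) (ω : Ω) :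
    traj A E θ (fun k _ => w k) x₀ k ω =
      traj A E (fun l (y : ℕ → S) => y l) (fun k _ => w k) x₀ k fun l => θ l ω := by
  induction k with
  | zero => rfl
  | succ k ih => simp only [traj, ih]

theorem measurable_traj [MeasurableSpace Ω] [Countable S] [MeasurableSpace S]
    [MeasurableSingletonClass S] {θ : ℕ → Ω → S} (hθ : ∀ k, Measurable (θ k))
    (A : S → Matrix (Fin n) (Fin n) ℝ) (E : S → Matrix (Fin n) (Fin q) ℝ)
    (w : ℕ → Fin q → ℝ) (x₀ : Fin n → ℝ) (k : ℕ) :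
    Measurable (traj A E θ (fun k _ => w k) x₀ k) := by
  rw [funext (traj_eq_comp θ A E w x₀ k)]
  exact measurable_comp_of_dependsOn hθ fun y z h =>
    dependsOn_traj A E w x₀ k fun l hl => h l (Set.Iio_subset_Iic_self hl)

end Trajectory

section ModeMoment

open scoped MatrixOrder

variable {Ω S : Type} {mΩ : MeasurableSpace Ω} {μ : Measure Ω} {n q : ℕ}

/-- The quadratic form `u ↦ E[(uᵀx)² 𝟙(Y = y)]` of the second moment matrix of `x` in mode `y`. -/
def modeMoment (μ : Measure Ω) (Y : Ω → S) (x : Ω → Fin n → ℝ) (y : S) (u : Fin n → ℝ) :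
    ENNReal :=
  ∫⁻ ω in Y ⁻¹' {y}, ENNReal.ofReal ((u ⬝ᵥ x ω) ^ 2) ∂μ

theorem modeMoment_const_le [IsProbabilityMeasure μ] (Y : Ω → S) (v : Fin n → ℝ) (y : S)
    (u : Fin n → ℝ) : modeMoment μ Y (fun _ => v) y u ≤ ENNReal.ofReal ((u ⬝ᵥ v) ^ 2) := by
  rw [modeMoment, setLIntegral_const]
  exact mul_le_of_le_one_right' prob_le_one

variable [MeasurableSpace S] [MeasurableSingletonClass S] {s : Finset S}

theorem lintegral_sqE_eq_sum_modeMoment {Y : Ω → S} (hY : Measurable Y) (hs : ∀ ω, Y ω ∈ s)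
    {x : Ω → Fin n → ℝ} (hx : Measurable x) :
    ∫⁻ ω, sqE (x ω) ∂μ = ∑ y ∈ s, ∑ i, modeMoment μ Y x y (Pi.single i 1) := by
  rw [lintegral_eq_sum_setLIntegral_preimage hY hs]
  refine Finset.sum_congr rfl fun y _ => ?_
  simp only [modeMoment, single_one_dotProduct]
  rw [← lintegral_finsetSum _ fun i _ => by fun_prop]
  simp only [sqE, ENNReal.ofReal_sum_of_nonneg fun i _ => sq_nonneg (x _ i)]

variable [Countable S] {θ : ℕ → Ω → S} {A : S → Matrix (Fin n) (Fin n) ℝ}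
  {E : S → Matrix (Fin n) (Fin q) ℝ} {x₀ : Fin n → ℝ} {p : S → S → ℝ}

theorem modeMoment_traj_succ [IsFiniteMeasure μ] (hθ : IsMarkovChain μ θ p)
    (hmeas : ∀ k, Measurable (θ k)) (hs : ∀ k ω, θ k ω ∈ s) (k : ℕ) (z : S) (u : Fin n → ℝ) :
    modeMoment μ (θ (k + 1)) (traj A E θ (fun _ _ => 0) x₀ (k + 1)) z u =
      ∑ y ∈ s, ENNReal.ofReal (p y z) *
        modeMoment μ (θ k) (traj A E θ (fun _ _ => 0) x₀ k) y ((A y)ᵀ *ᵥ u) := by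
  let g (y : ℕ → S) : ENNReal :=
    .ofReal ((u ⬝ᵥ traj A E (fun l (y : ℕ → S) => y l) (fun _ _ => 0) x₀ (k + 1) y) ^ 2)
  have hg : DependsOn g (Set.Iic k) := fun y y' h => by
    simp only [g]
    rw [dependsOn_traj A E (fun _ => 0) x₀ (k + 1) fun l hl => h l (Nat.le_of_lt_succ hl)]
  have hgx (ω) : g (fun l => θ l ω) =
      .ofReal (((A (θ k ω))ᵀ *ᵥ u ⬝ᵥ traj A E θ (fun _ _ => 0) x₀ k ω) ^ 2) := by
    simp only [g]
    rw [← traj_eq_comp θ A E (fun _ => 0), traj, mulVec_zero, add_zero, dotProduct_mulVec,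
      mulVec_transpose]
  simp_rw [modeMoment, traj_eq_comp θ A E (fun _ => 0) x₀ (k + 1)]
  rw [hθ.setLIntegral_succ hmeas z hg, lintegral_eq_sum_setLIntegral_preimage (hmeas k) (hs k)]
  refine Finset.sum_congr rfl fun y _ => ?_
  rw [← lintegral_const_mul' _ _ ENNReal.ofReal_ne_top]
  refine setLIntegral_congr_fun (hmeas k (measurableSet_singleton y)) fun ω (hω : θ k ω = y) => ?_
  simp only [hgx, hω]

theorem modeMoment_traj_le [IsProbabilityMeasure μ] (hθ : IsMarkovChain μ θ p)
    (hmeas : ∀ k, Measurable (θ k)) (hs : ∀ k ω, θ k ω ∈ s) (hp : ∀ y z, 0 ≤ p y z)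
    {Y : S → Matrix (Fin n) (Fin n) ℝ} {c lam : ℝ} (hc : 0 ≤ c) (hlam : 0 ≤ lam)
    (hY₀ : ∀ y ∈ s, ∀ u, (u ⬝ᵥ x₀) ^ 2 ≤ c * (u ⬝ᵥ Y y *ᵥ u))
    (hY : ∀ z ∈ s, couplingOp p s (fun y => A y * Y y * (A y)ᵀ) z ≤ lam • Y z)
    (k : ℕ) {z : S} (hz : z ∈ s) (u : Fin n → ℝ) :
    modeMoment μ (θ k) (traj A E θ (fun _ _ => 0) x₀ k) z u ≤
      ENNReal.ofReal (c * lam ^ k * (u ⬝ᵥ Y z *ᵥ u)) := by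
  induction k generalizing z u with
  | zero =>
    rw [pow_zero, mul_one]
    exact (modeMoment_const_le (θ 0) x₀ z u).trans (ENNReal.ofReal_le_ofReal (hY₀ z hz u))
  | succ k ih =>
    have hterm (y) (hy : y ∈ s) :
        0 ≤ p y z * (c * lam ^ k * ((A y)ᵀ *ᵥ u ⬝ᵥ Y y *ᵥ (A y)ᵀ *ᵥ u)) := by
      rw [mul_right_comm]
      exact mul_nonneg (hp y z)
        (mul_nonneg ((sq_nonneg _).trans (hY₀ y hy _)) (pow_nonneg hlam k))
    calc modeMoment μ (θ (k + 1)) (traj A E θ (fun _ _ => 0) x₀ (k + 1)) z u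
        = ∑ y ∈ s, ENNReal.ofReal (p y z) *
            modeMoment μ (θ k) (traj A E θ (fun _ _ => 0) x₀ k) y ((A y)ᵀ *ᵥ u) :=
          modeMoment_traj_succ hθ hmeas hs k z u
      _ ≤ ∑ y ∈ s, ENNReal.ofReal (p y z) *
            ENNReal.ofReal (c * lam ^ k * ((A y)ᵀ *ᵥ u ⬝ᵥ Y y *ᵥ (A y)ᵀ *ᵥ u)) :=
          Finset.sum_le_sum fun y hy => mul_le_mul_right (ih hy _) _
      _ = ENNReal.ofReal (c * lam ^ k *
            (u ⬝ᵥ couplingOp p s (fun y => A y * Y y * (A y)ᵀ) z *ᵥ u)) := by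
          simp_rw [← ENNReal.ofReal_mul (hp _ z)]
          rw [← ENNReal.ofReal_sum_of_nonneg hterm]
          simp only [couplingOp, sum_mulVec, dotProduct_sum, Finset.mul_sum, smul_mulVec,
            dotProduct_smul, smul_eq_mul, transpose_mulVec_dotProduct_mulVec, mul_left_comm]
      _ ≤ ENNReal.ofReal (c * lam ^ k * (u ⬝ᵥ (lam • Y z) *ᵥ u)) := by
          gcongr
          exact dotProduct_mulVec_le_of_le (hY z hz) u
      _ = ENNReal.ofReal (c * lam ^ (k + 1) * (u ⬝ᵥ Y z *ᵥ u)) := by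
          rw [smul_mulVec, dotProduct_smul, smul_eq_mul, pow_succ, ← mul_assoc, ← mul_assoc]

theorem lintegral_sqE_traj_le [IsProbabilityMeasure μ] (hθ : IsMarkovChain μ θ p)
    (hmeas : ∀ k, Measurable (θ k)) (hs : ∀ k ω, θ k ω ∈ s) (hp : ∀ y z, 0 ≤ p y z)
    {Y : S → Matrix (Fin n) (Fin n) ℝ} {c lam : ℝ} (hc : 0 ≤ c) (hlam : 0 ≤ lam)
    (hY₀ : ∀ y ∈ s, ∀ u, (u ⬝ᵥ x₀) ^ 2 ≤ c * (u ⬝ᵥ Y y *ᵥ u))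
    (hY : ∀ z ∈ s, couplingOp p s (fun y => A y * Y y * (A y)ᵀ) z ≤ lam • Y z) (k : ℕ) :
    ∫⁻ ω, sqE (traj A E θ (fun _ _ => 0) x₀ k ω) ∂μ ≤
      ENNReal.ofReal (c * lam ^ k * ∑ y ∈ s, (Y y).trace) := by
  have hnonneg (y) (hy : y ∈ s) (i : Fin n) : 0 ≤ c * lam ^ k * Y y i i := by
    have := (sq_nonneg _).trans (hY₀ y hy (Pi.single i 1))
    rw [mulVec_single_one, single_one_dotProduct, col_apply] at this
    rw [mul_right_comm]
    exact mul_nonneg this (pow_nonneg hlam k)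
  rw [lintegral_sqE_eq_sum_modeMoment (hmeas k) (hs k)
    (measurable_traj hmeas A E (fun _ => 0) x₀ k)]
  calc ∑ y ∈ s, ∑ i, modeMoment μ (θ k) (traj A E θ (fun _ _ => 0) x₀ k) y (Pi.single i 1)
      ≤ ∑ y ∈ s, ∑ i, ENNReal.ofReal (c * lam ^ k * Y y i i) := by
        refine Finset.sum_le_sum fun y hy => Finset.sum_le_sum fun i _ => ?_
        simpa using modeMoment_traj_le hθ hmeas hs hp hc hlam hY₀ hY k hy (Pi.single i 1)
    _ = ENNReal.ofReal (∑ y ∈ s, ∑ i, c * lam ^ k * Y y i i) := by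
        rw [ENNReal.ofReal_sum_of_nonneg fun y hy => Finset.sum_nonneg fun i _ => hnonneg y hy i]
        exact Finset.sum_congr rfl fun y hy =>
          (ENNReal.ofReal_sum_of_nonneg fun i _ => hnonneg y hy i).symm
    _ = ENNReal.ofReal (c * lam ^ k * ∑ y ∈ s, (Y y).trace) := by
        simp only [trace, diag_apply, Finset.mul_sum]

end ModeMoment

theorem exists_lintegral_sqE_traj_le_of_lyapunov {S : Type} [Countable S] [MeasurableSpace S]
    [MeasurableSingletonClass S] {n q : ℕ} {p : S → S → ℝ} (hp : ∀ y z, 0 ≤ p y z) {s : Finset S}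
    {A R : S → Matrix (Fin n) (Fin n) ℝ} (E : S → Matrix (Fin n) (Fin q) ℝ)
    (hR : ∀ y ∈ s, (R y).PosSemidef)
    (hlyap : ∀ y ∈ s, (R y - A y * couplingOp p s R y * (A y)ᵀ).PosDef) :
    ∃ c : ℝ, 0 < c ∧ ∃ lam : ℝ, 0 ≤ lam ∧ lam < 1 ∧
      ∀ {Ω : Type} [MeasurableSpace Ω] {μ : Measure Ω} [IsProbabilityMeasure μ]
        {θ : ℕ → Ω → S}, IsMarkovChain μ θ p → (∀ k, Measurable (θ k)) → (∀ k ω, θ k ω ∈ s) →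
        ∀ (x₀ : Fin n → ℝ) (k : ℕ), ∫⁻ ω, sqE (traj A E θ (fun _ _ => 0) x₀ k ω) ∂μ ≤
          ENNReal.ofReal (c * lam ^ k * ∑ i, x₀ i ^ 2) := by
  obtain ⟨ε, hε0, hε1, hεs⟩ :=
    exists_mul_add_smul_one_mul_le (fun y hy => (hR y hy).isHermitian) hlyap
  have hD (y) : (couplingOp p s R y).PosSemidef := posSemidef_couplingOp hp hR y
  let Y (y : S) : Matrix (Fin n) (Fin n) ℝ := couplingOp p s R y + ε • 1
  have htrace : 0 ≤ ∑ y ∈ s, (Y y).trace :=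
    Finset.sum_nonneg fun y _ => ((hD y).add (PosSemidef.one.smul hε0.le)).trace_nonneg
  refine ⟨ε⁻¹ * ∑ y ∈ s, (Y y).trace + 1, by positivity, 1 - ε, by linarith, by linarith,
    fun hθ hmeas hs x₀ k => ?_⟩
  refine (lintegral_sqE_traj_le hθ hmeas hs hp (by positivity) (by linarith)
    (fun y _ u => sq_dotProduct_le_of_posSemidef (hD y) hε0 u x₀)
    (fun z _ => couplingOp_le_smul_couplingOp_add hp hε0.le hε1.le hεs z) k).trans
    (ENNReal.ofReal_le_ofReal ?_)
  have hpow : 0 ≤ (1 - ε) ^ k * ∑ i, x₀ i ^ 2 :=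
    mul_nonneg (pow_nonneg (by linarith) k) (by positivity)
  calc ε⁻¹ * (∑ i, x₀ i ^ 2) * (1 - ε) ^ k * ∑ y ∈ s, (Y y).trace
      = ε⁻¹ * (∑ y ∈ s, (Y y).trace) * ((1 - ε) ^ k * ∑ i, x₀ i ^ 2) := by ring
    _ ≤ (ε⁻¹ * ∑ y ∈ s, (Y y).trace + 1) * ((1 - ε) ^ k * ∑ i, x₀ i ^ 2) :=
        mul_le_mul_of_nonneg_right (le_add_of_nonneg_right zero_le_one) hpow
    _ = (ε⁻¹ * ∑ y ∈ s, (Y y).trace + 1) * (1 - ε) ^ k * ∑ i, x₀ i ^ 2 := by ring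

namespace IsMarkovChain

variable {Ω S U : Type} {mΩ : MeasurableSpace Ω} {μ : Measure Ω}

theorem prodMk [MeasurableSpace S] [MeasurableSingletonClass S] [MeasurableSpace U]
    [MeasurableSingletonClass U] {X : ℕ → Ω → S} {Y : ℕ → Ω → U} {P : S → S → ℝ} {Q : U → U → ℝ}
    (hX : IsMarkovChain μ X P) (hY : IsMarkovChain μ Y Q)
    (hXY : IndepFun (fun ω k => X k ω) (fun ω k => Y k ω) μ) :
    IsMarkovChain μ (fun k ω => (X k ω, Y k ω)) fun i j => P i.1 j.1 * Q i.2 j.2 := by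
  intro k j i
  have hpast : {ω | ∀ l ≤ k, (X l ω, Y l ω) = i l} =
      (fun ω l => X l ω) ⁻¹' {x | ∀ l ≤ k, x l = (i l).1} ∩
        (fun ω l => Y l ω) ⁻¹' {y | ∀ l ≤ k, y l = (i l).2} := by
    ext ω
    simp [Prod.ext_iff, forall_and]
  have hnext : {ω | (X (k + 1) ω, Y (k + 1) ω) = j ∧ ∀ l ≤ k, (X l ω, Y l ω) = i l} =
      (fun ω l => X l ω) ⁻¹' {x | x (k + 1) = j.1 ∧ ∀ l ≤ k, x l = (i l).1} ∩
        (fun ω l => Y l ω) ⁻¹' {y | y (k + 1) = j.2 ∧ ∀ l ≤ k, y l = (i l).2} := by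
    ext ω
    simp [Prod.ext_iff, forall_and, and_and_and_comm]
  rw [hpast, hnext, hXY.measure_inter_preimage_eq_mul _ _ (by measurability) (by measurability),
    hXY.measure_inter_preimage_eq_mul _ _ (by measurability) (by measurability),
    ENNReal.toReal_mul, ENNReal.toReal_mul]
  simp only [Set.preimage_ofPred_eq]
  rw [hX k j.1 fun l => (i l).1, hY k j.2 fun l => (i l).2]
  ring

theorem of_recursion [DecidableEq U] {Y : ℕ → Ω → S} {Z : ℕ → Ω → U} {P : S → S → ℝ} {π : U → S}
    {init : S → U} {next : U → S → U} (hY : IsMarkovChain μ Y P)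
    (hπ : ∀ k ω, π (Z k ω) = Y k ω) (hinit : ∀ ω, Z 0 ω = init (Y 0 ω))
    (hnext : ∀ k ω, Z (k + 1) ω = next (Z k ω) (Y (k + 1) ω)) :
    IsMarkovChain μ Z fun z z' => if next z (π z') = z' then P (π z) (π z') else 0 := by
  intro k z i
  by_cases hi : ∃ ω₀, ∀ l ≤ k, Z l ω₀ = i l
  · obtain ⟨ω₀, hω₀⟩ := hi
    -- Given one path of `Z` through `i`, the pasts of `Z` and of `Y` carry the same information.
    have hpast (ω) : (∀ l ≤ k, Z l ω = i l) ↔ ∀ l ≤ k, Y l ω = π (i l) := by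
      refine ⟨fun h l hl => by rw [← hπ, h l hl], fun h l hl => ?_⟩
      induction l with
      | zero => rw [hinit, h 0 hl, ← hω₀ 0 hl, hπ, hinit]
      | succ l ih => rw [hnext, ih (by omega), h _ hl, ← hω₀ _ (by omega), ← hω₀ _ hl, hπ, hnext]
    simp only [hpast]
    split_ifs with hz
    · rw [← hY k (π z) fun l => π (i l)]
      congr! 4 with ω
      refine and_congr_left fun h => ⟨fun hω => by rw [← hω, hπ], fun hω => ?_⟩
      rw [hnext, (hpast ω).2 h k le_rfl, hω, hz]
    · have : {ω | Z (k + 1) ω = z ∧ ∀ l ≤ k, Y l ω = π (i l)} = ∅ := by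
        refine Set.eq_empty_of_forall_notMem fun ω ⟨hω, h⟩ => hz ?_
        rw [← (hpast ω).2 h k le_rfl, ← hω, hπ, ← hnext]
      simp [this]
  · have hpast (ω) : ¬ ∀ l ≤ k, Z l ω = i l := fun h => hi ⟨ω, h⟩
    simp [hpast]

end IsMarkovChain

theorem intToFin_zero (T : ℕ) [NeZero T] : intToFin T 0 = 0 := by
  ext
  simp [intToFin]

theorem intToFin_add_one (T : ℕ) [NeZero T] (a : ℤ) : intToFin T (a + 1) = intToFin T a + 1 := by
  have hT : (T : ℤ) ≠ 0 := by exact_mod_cast NeZero.ne T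
  ext
  zify
  simp [intToFin, Fin.val_add, Int.emod_nonneg _ hT, Int.add_emod]

section ExtendedChain

variable {Ω : Type} {N M T : ℕ} [NeZero T]

/-- The state of the extended process entered when the plant and the observer move to `a`, where
`c` is the last observed mode together with the (0-indexed) time since that observation. -/
def rbarNext (f : Fin M → Bool) (c : Fin N × Fin T) (a : Fin N × Fin M) : XT N M T :=
  if f a.2 then (a.1, a.2, a.1, 0) else (a.1, a.2, c.1, c.2 + 1)

variable (r : ℕ → Ω → Fin N) (s : ℕ → Ω → Fin M) (f : Fin M → Bool) (τ₀ : ℤ) (σ₀ : Fin N)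

theorem inX_rbarNext (c : Fin N × Fin T) (a : Fin N × Fin M) : inX f (rbarNext f c a) := by
  unfold inX rbarNext
  split_ifs with h <;> simp [h]

-- `rbarNext` advances the clock by one, so the initial state is entered from time `-1`.
theorem rbarProc_zero (ω : Ω) :
    rbarProc (T := T) r s f τ₀ σ₀ 0 ω =
      rbarNext f (σ₀, intToFin T (-τ₀ - 1)) (r 0 ω, s 0 ω) := by
  by_cases h : f (s 0 ω) <;>
    simp [rbarProc, rbarNext, sigmaProc, rhoProc, tauZ, h, intToFin_zero, ← intToFin_add_one]

theorem rbarProc_succ_of_observed {k : ℕ} {ω : Ω} (h : f (s (k + 1) ω) = true) :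
    rbarProc (T := T) r s f τ₀ σ₀ (k + 1) ω =
      (r (k + 1) ω, s (k + 1) ω, r (k + 1) ω, 0) := by
  have hex : ∃ j ≤ k + 1, f (s j ω) = true := ⟨k + 1, le_rfl, h⟩
  simp [rbarProc, sigmaProc, rhoProc, tauZ, hex, Nat.findGreatest_eq, h, intToFin_zero]

theorem rbarProc_succ_of_not_observed {k : ℕ} {ω : Ω} (h : ¬ f (s (k + 1) ω) = true) :
    rbarProc (T := T) r s f τ₀ σ₀ (k + 1) ω =
      (r (k + 1) ω, s (k + 1) ω, sigmaProc r s f σ₀ k ω, rhoProc s f τ₀ k ω + 1) := by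
  have hex : (∃ j ≤ k + 1, f (s j ω) = true) ↔ ∃ j ≤ k, f (s j ω) = true := by
    simp [Nat.le_add_one_iff, or_and_right, exists_or, h]
  simp [rbarProc, sigmaProc, rhoProc, tauZ, hex, Nat.findGreatest_of_not, h, ← intToFin_add_one,
    add_sub_right_comm]

theorem rbarProc_succ (k : ℕ) (ω : Ω) :
    rbarProc (T := T) r s f τ₀ σ₀ (k + 1) ω =
      rbarNext f (rbarProc r s f τ₀ σ₀ k ω).2.2 (r (k + 1) ω, s (k + 1) ω) := by
  by_cases h : f (s (k + 1) ω) = true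
  · rw [rbarProc_succ_of_observed r s f τ₀ σ₀ h, rbarNext, if_pos h]
  · rw [rbarProc_succ_of_not_observed r s f τ₀ σ₀ h, rbarNext, if_neg h, rbarProc]

theorem inX_rbarProc (k : ℕ) (ω : Ω) : inX f (rbarProc (T := T) r s f τ₀ σ₀ k ω) := by
  cases k with
  | zero => rw [rbarProc_zero]; exact inX_rbarNext f _ _
  | succ k => rw [rbarProc_succ]; exact inX_rbarNext f _ _

variable {r s} in
theorem measurable_rbarProc [MeasurableSpace Ω] (hr : ∀ k, Measurable (r k))
    (hs : ∀ k, Measurable (s k)) (k : ℕ) : Measurable (rbarProc (T := T) r s f τ₀ σ₀ k) := by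
  induction k with
  | zero =>
    rw [funext (rbarProc_zero r s f τ₀ σ₀)]
    exact (measurable_of_finite (rbarNext f (σ₀, intToFin T (-τ₀ - 1)))).comp
      ((hr 0).prodMk (hs 0))
  | succ k ih =>
    rw [funext (rbarProc_succ r s f τ₀ σ₀ k)]
    exact (measurable_of_finite fun p : XT N M T × Fin N × Fin M => rbarNext f p.1.2.2 p.2).comp
      (ih.prodMk ((hr (k + 1)).prodMk (hs (k + 1))))

variable {τ₀ σ₀ r s}
variable (P : Matrix (Fin N) (Fin N) ℝ) (Q : Matrix (Fin M) (Fin M) ℝ)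

theorem pbar_eq_ite (χ χ' : XT N M T) :
    pbar P Q f χ χ' =
      if rbarNext f χ.2.2 (χ'.1, χ'.2.1) = χ' then P χ.1 χ'.1 * Q χ.2.1 χ'.2.1 else 0 := by
  by_cases h : f χ'.2.1 <;> simp [pbar, rbarNext, h, Prod.ext_iff, eq_comm]

variable {P Q}

theorem pbar_nonneg (hP : ∀ i j, 0 ≤ P i j) (hQ : ∀ i j, 0 ≤ Q i j) (χ χ' : XT N M T) :
    0 ≤ pbar P Q f χ χ' := by
  rw [pbar_eq_ite]
  split_ifs
  exacts [mul_nonneg (hP _ _) (hQ _ _), le_rfl]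

theorem isMarkovChain_rbarProc {mΩ : MeasurableSpace Ω} {μ : Measure Ω}
    (hr : IsMarkovChain μ r P) (hs : IsMarkovChain μ s Q)
    (hrs : IndepFun (fun ω k => r k ω) (fun ω k => s k ω) μ) :
    IsMarkovChain μ (rbarProc r s f τ₀ σ₀) (pbar (T := T) P Q f) := by
  rw [funext₂ (pbar_eq_ite f P Q)]
  exact (hr.prodMk hs hrs).of_recursion (π := fun χ : XT N M T => (χ.1, χ.2.1))
    (next := fun χ => rbarNext f χ.2.2) (fun _ _ => rfl) (rbarProc_zero r s f τ₀ σ₀)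
    (rbarProc_succ r s f τ₀ σ₀)

/-- The extended process of a realization of `(r, s)`, as a realization of the chain `θ`. -/
abbrev MJLSReal.toThetaReal (S : MJLSReal N M P Q) (T : ℕ) [NeZero T] (f : Fin M → Bool)
    (τ₀ : ℤ) (σ₀ : Fin N) : ThetaReal N M T P Q f where
  Ω := S.Ω
  inst := S.inst
  μ := S.μ
  prob := S.prob
  θ := rbarProc S.r S.s f τ₀ σ₀
  meas := letI := S.inst; measurable_rbarProc f τ₀ σ₀ S.meas_r S.meas_s
  mem := inX_rbarProc S.r S.s f τ₀ σ₀
  markov := isMarkovChain_rbarProc f S.markov_r S.markov_s S.indep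

theorem MeanSquareStableBar.meanSquareStable {n m q : ℕ} {A : Fin N → Matrix (Fin n) (Fin n) ℝ}
    {B : Fin N → Matrix (Fin n) (Fin m) ℝ} {E : Fin N → Matrix (Fin n) (Fin q) ℝ}
    {K : Fin N → Fin T → Matrix (Fin m) (Fin n) ℝ} (h : MeanSquareStableBar P Q f A B E K) :
    MeanSquareStable P Q f A B E K := by
  obtain ⟨c, hc, lam, hlam0, hlam1, hbound⟩ := h
  refine ⟨c, hc, lam, hlam0, hlam1, fun S τ₀ _ σ₀ r₀ s₀ hinit => ?_⟩
  refine hbound (S.toThetaReal T f τ₀ σ₀) _ (inX_rbarNext f (σ₀, intToFin T (-τ₀ - 1)) (r₀, s₀)) ?_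
  filter_upwards [hinit] with ω hω
  rw [← hω.1, ← hω.2]
  exact rbarProc_zero S.r S.s f τ₀ σ₀ ω

end ExtendedChain

section ClosedLoop

variable {N M T n m q : ℕ} [NeZero T] {P : Matrix (Fin N) (Fin N) ℝ}
  {Q : Matrix (Fin M) (Fin M) ℝ} {f : Fin M → Bool} {A : Fin N → Matrix (Fin n) (Fin n) ℝ}
  {B : Fin N → Matrix (Fin n) (Fin m) ℝ} {R : XT N M T → Matrix (Fin n) (Fin n) ℝ}
  {G : Fin N → Fin T → Matrix (Fin n) (Fin n) ℝ} {F : Fin N → Fin T → Matrix (Fin m) (Fin n) ℝ}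

open Classical in
/-- The state space `𝔛` of the extended chain, as a finite set. -/
def extendedStates (f : Fin M → Bool) : Finset (XT N M T) := {χ | inX f χ}

theorem mem_extendedStates {χ : XT N M T} : χ ∈ extendedStates f ↔ inX f χ := by
  simp [extendedStates]

variable (P Q f R) in
theorem Dop_eq_couplingOp (χ : XT N M T) :
    Dop P Q f R χ = couplingOp (pbar P Q f) (extendedStates f) R χ :=
  (@Finset.sum_filter _ _ _ _ _ (Classical.decPred _) _).symm

/-- The stabilization LMIs in the unknowns `R_χ`, `G_{γ,δ}`, `F_{γ,δ}`. -/
def StabilizationLMI (P : Matrix (Fin N) (Fin N) ℝ) (Q : Matrix (Fin M) (Fin M) ℝ)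
    (f : Fin M → Bool) (A : Fin N → Matrix (Fin n) (Fin n) ℝ)
    (B : Fin N → Matrix (Fin n) (Fin m) ℝ) (R : XT N M T → Matrix (Fin n) (Fin n) ℝ)
    (G : Fin N → Fin T → Matrix (Fin n) (Fin n) ℝ)
    (F : Fin N → Fin T → Matrix (Fin m) (Fin n) ℝ) : Prop :=
  ∀ χ : XT N M T, inX f χ →
    (fromBlocks (R χ) (A χ.1 * G χ.2.2.1 χ.2.2.2 + B χ.1 * F χ.2.2.1 χ.2.2.2)
      (A χ.1 * G χ.2.2.1 χ.2.2.2 + B χ.1 * F χ.2.2.1 χ.2.2.2)ᵀ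
      (G χ.2.2.1 χ.2.2.2 + (G χ.2.2.1 χ.2.2.2)ᵀ - Dop P Q f R χ)).PosDef

namespace StabilizationLMI

theorem posDef (h : StabilizationLMI P Q f A B R G F) {χ : XT N M T} (hχ : inX f χ) :
    (R χ).PosDef :=
  (h χ hχ).submatrix Sum.inl_injective

theorem posSemidef_Dop (hP : ∀ i j, 0 ≤ P i j) (hQ : ∀ i j, 0 ≤ Q i j)
    (h : StabilizationLMI P Q f A B R G F) (χ : XT N M T) : (Dop P Q f R χ).PosSemidef := by
  rw [Dop_eq_couplingOp]
  exact posSemidef_couplingOp (pbar_nonneg f hP hQ)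
    (fun χ hχ => (h.posDef (mem_extendedStates.1 hχ)).posSemidef) χ

theorem isUnit (hP : ∀ i j, 0 ≤ P i j) (hQ : ∀ i j, 0 ≤ Q i j)
    (h : StabilizationLMI P Q f A B R G F) {γ : Fin N} {δ : Fin T} (hγδ : Admissible f γ δ) :
    IsUnit (G γ δ) := by
  obtain ⟨α, β, hχ⟩ := hγδ
  have hG : (G γ δ + (G γ δ)ᵀ - Dop P Q f R (α, β, γ, δ)).PosDef :=
    (h _ hχ).submatrix Sum.inr_injective
  refine isUnit_of_posDef_add_conjTranspose ?_
  simpa using hG.add_posSemidef (h.posSemidef_Dop hP hQ (α, β, γ, δ))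

theorem posDef_sub_AKmat_mul_mul (hP : ∀ i j, 0 ≤ P i j) (hQ : ∀ i j, 0 ≤ Q i j)
    (h : StabilizationLMI P Q f A B R G F) {K : Fin N → Fin T → Matrix (Fin m) (Fin n) ℝ}
    (hK : ∀ γ δ, Admissible f γ δ → K γ δ = F γ δ * (G γ δ)⁻¹) {χ : XT N M T} (hχ : inX f χ) :
    (R χ - AKmat A B K χ * Dop P Q f R χ * (AKmat A B K χ)ᵀ).PosDef := by
  have hadm : Admissible f χ.2.2.1 χ.2.2.2 := ⟨χ.1, χ.2.1, hχ⟩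
  have hdet := (isUnit_iff_isUnit_det _).1 (h.isUnit hP hQ hadm)
  have hAG : A χ.1 * G χ.2.2.1 χ.2.2.2 + B χ.1 * F χ.2.2.1 χ.2.2.2 =
      AKmat A B K χ * G χ.2.2.1 χ.2.2.2 := by
    rw [AKmat, hK _ _ hadm, Matrix.add_mul, Matrix.mul_assoc (B _),
      nonsing_inv_mul_cancel_right _ _ hdet]
  have hχLMI := h χ hχ
  rw [hAG] at hχLMI
  exact posDef_sub_mul_mul_conjTranspose_of_fromBlocks hχLMI

theorem meanSquareStableBar (hP : ∀ i j, 0 ≤ P i j) (hQ : ∀ i j, 0 ≤ Q i j)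
    (h : StabilizationLMI P Q f A B R G F) {K : Fin N → Fin T → Matrix (Fin m) (Fin n) ℝ}
    (hK : ∀ γ δ, Admissible f γ δ → K γ δ = F γ δ * (G γ δ)⁻¹)
    (E : Fin N → Matrix (Fin n) (Fin q) ℝ) : MeanSquareStableBar P Q f A B E K := by
  have hlyap (χ) (hχ : χ ∈ extendedStates f) : (R χ - AKmat A B K χ *
      couplingOp (pbar P Q f) (extendedStates f) R χ * (AKmat A B K χ)ᵀ).PosDef := by
    rw [← Dop_eq_couplingOp]
    exact h.posDef_sub_AKmat_mul_mul hP hQ hK (mem_extendedStates.1 hχ)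
  obtain ⟨c, hc, lam, hlam0, hlam1, hbound⟩ := exists_lintegral_sqE_traj_le_of_lyapunov
    (pbar_nonneg f hP hQ) (fun χ => E χ.1)
    (fun χ hχ => (h.posDef (mem_extendedStates.1 hχ)).posSemidef) hlyap
  refine ⟨c, hc, lam, hlam0, hlam1, fun S _ _ _ x₀ k => ?_⟩
  let _ := S.inst
  have := S.prob
  exact hbound S.markov S.meas (fun k ω => mem_extendedStates.2 (S.mem k ω)) x₀ k

end StabilizationLMI

end ClosedLoop

/-- the stabilization LMIs imply invertibility of the `G_{γ,δ}` and,
for any gains with `K_{γ,δ} = F_{γ,δ} G_{γ,δ}⁻¹` on admissible pairs, mean square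
stability of the closed-loop system `Σ_K`. -/
theorem stabilization_lmi_mss
    {NN MM T n m q ℓ : ℕ} [NeZero NN] [NeZero MM] [NeZero T]
    [NeZero n] [NeZero m] [NeZero q] [NeZero ℓ]
    (P : Matrix (Fin NN) (Fin NN) ℝ) (Qm : Matrix (Fin MM) (Fin MM) ℝ)
    (hP0 : ∀ i j, 0 ≤ P i j) (hP1 : ∀ i, ∑ j, P i j = 1)
    (hQ0 : ∀ i j, 0 ≤ Qm i j) (hQ1 : ∀ i, ∑ j, Qm i j = 1)
    (f : Fin MM → Bool)
    (A : Fin NN → Matrix (Fin n) (Fin n) ℝ) (B : Fin NN → Matrix (Fin n) (Fin m) ℝ)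
    (C : Fin NN → Matrix (Fin ℓ) (Fin n) ℝ) (D : Fin NN → Matrix (Fin ℓ) (Fin m) ℝ)
    (E : Fin NN → Matrix (Fin n) (Fin q) ℝ)
    (R : XT NN MM T → Matrix (Fin n) (Fin n) ℝ)
    (hRsym : ∀ χ, inX f χ → (R χ).IsHermitian)
    (G : Fin NN → Fin T → Matrix (Fin n) (Fin n) ℝ)
    (F : Fin NN → Fin T → Matrix (Fin m) (Fin n) ℝ)
    (hLMI : ∀ χ : XT NN MM T, inX f χ →
      (Matrix.fromBlocks (R χ)
        (A χ.1 * G χ.2.2.1 χ.2.2.2 + B χ.1 * F χ.2.2.1 χ.2.2.2)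
        (A χ.1 * G χ.2.2.1 χ.2.2.2 + B χ.1 * F χ.2.2.1 χ.2.2.2)ᵀ
        (G χ.2.2.1 χ.2.2.2 + (G χ.2.2.1 χ.2.2.2)ᵀ - Dop P Qm f R χ)).PosDef) :
    (∀ g d, Admissible f g d → IsUnit (G g d)) ∧
    ∀ K : Fin NN → Fin T → Matrix (Fin m) (Fin n) ℝ,
      (∀ g d, Admissible f g d → K g d = F g d * (G g d)⁻¹) →
      MeanSquareStable P Qm f A B E K := by
  have hstab : StabilizationLMI P Qm f A B R G F := hLMI
  exact ⟨fun _ _ hgd => hstab.isUnit hP0 hQ0 hgd,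
    fun _ hK => (hstab.meanSquareStableBar hP0 hQ0 hK E).meanSquareStable⟩

end
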